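/- Let k be a field and consider the path algebra of the linear quiver A_n : 1 → 2 → ⋯ → n. For each pair 1 ≤ i ≤ j ≤ n there is up to isomorphism exactly one indecomposable representation M_{ij} with dimension vector equal to the indicator of the interval [i, j] (i.e., dimension 1 at vertices i, i+1, ..., j and 0 elsewhere), and every indecomposable finite-dimensional representation of A_n is isomorphic to some M_{ij}. In particular there are exactly n(n+1)/2 indecomposables, matching the number of positive roots of type A_n. -/

import Mathlib

open Module

/-- A finite-dimensional representation of the linear quiver
`A_{n+1} : 0 → 1 → ⋯ → n`. -/
structure RepA (k : Type) [Field k] (n : ℕ) where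
  V : Fin (n + 1) → Type
  [addGrp : ∀ v, AddCommGroup (V v)]
  [mod : ∀ v, Module k (V v)]
  [fd : ∀ v, FiniteDimensional k (V v)]
  f : ∀ a : Fin n, V a.castSucc →ₗ[k] V a.succ

attribute [instance] RepA.addGrp RepA.mod RepA.fd

variable {k : Type} [Field k] {n : ℕ}

/-- Isomorphism of representations. -/
def RepA.Iso (M N : RepA k n) : Prop :=
  ∃ g : ∀ v, M.V v ≃ₗ[k] N.V v,
    ∀ (a : Fin n) (x : M.V a.castSucc), g a.succ (M.f a x) = N.f a (g a.castSucc x)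

/-- Direct sum of representations. -/
def RepA.dsum (M N : RepA k n) : RepA k n where
  V v := M.V v × N.V v
  f a := (M.f a).prodMap (N.f a)

/-- The zero representation. -/
def RepA.IsZero (M : RepA k n) : Prop := ∀ (v : Fin (n + 1)) (x : M.V v), x = 0

/-- An indecomposable representation: nonzero and not isomorphic to a direct
sum of two nonzero representations. -/
def RepA.Indec (M : RepA k n) : Prop :=
  ¬ M.IsZero ∧ ∀ N P : RepA k n, M.Iso (N.dsum P) → N.IsZero ∨ P.IsZero

/-- The dimension vector of a representation. -/
noncomputable def RepA.dimVec (M : RepA k n) : Fin (n + 1) → ℕ := fun v => finrank k (M.V v)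

/-!
Given a nonzero representation `M`, let `i` be the first vertex with `V_i ≠ 0` and `j` the last one
for which the composite `V_i → V_j` is nonzero. A vector of `V_i` surviving in `V_j`, together with
a functional on `V_j` detecting its image, exhibits `M_{ij}` as a retract, hence a direct summand,
of `M`; so an indecomposable `M` is `M_{ij}` itself. Conversely `M_{ij}` is generated by one vector
at `i`, so its endomorphisms are scalars, and a projection onto a direct summand is then `0` or an
isomorphism.
-/

theorem fin_le_induction {v : Fin (n + 1)} {motive : ∀ w, v ≤ w → Prop} (self : motive v le_rfl)
    (succ : ∀ (a : Fin n) (ha : v ≤ a.castSucc),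
      motive a.castSucc ha → motive a.succ (ha.trans Fin.castSucc_lt_succ.le))
    {w : Fin (n + 1)} (hvw : v ≤ w) : motive w hvw := by
  induction w using Fin.induction with
  | zero =>
    obtain rfl := Fin.le_zero_iff.1 hvw
    exact self
  | succ a ih =>
    rcases hvw.eq_or_lt with rfl | hlt
    · exact self
    · have hva : v ≤ a.castSucc := Fin.le_castSucc_iff.2 hlt
      exact succ a hva (ih hva)

namespace RepA

theorem symm_apply_f {M N : RepA k n} (g : ∀ v, M.V v ≃ₗ[k] N.V v)
    (hg : ∀ (a : Fin n) (x : M.V a.castSucc), g a.succ (M.f a x) = N.f a (g a.castSucc x))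
    (a : Fin n) (y : N.V a.castSucc) :
    (g a.succ).symm (N.f a y) = M.f a ((g a.castSucc).symm y) := by
  rw [LinearEquiv.symm_apply_eq, hg, LinearEquiv.apply_symm_apply]

namespace Iso

theorem symm {M N : RepA k n} : M.Iso N → N.Iso M := fun ⟨g, hg⟩ =>
  ⟨fun v => (g v).symm, symm_apply_f g hg⟩

theorem trans {M N P : RepA k n} : M.Iso N → N.Iso P → M.Iso P := fun ⟨g, hg⟩ ⟨h, hh⟩ =>
  ⟨fun v => (g v).trans (h v), fun a x => by simp only [LinearEquiv.trans_apply, hg, hh]⟩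

theorem dimVec_eq {M N : RepA k n} : M.Iso N → M.dimVec = N.dimVec := fun ⟨g, _⟩ =>
  funext fun v => (g v).finrank_eq

end Iso

/-- Morphisms of representations. -/
structure Hom (M N : RepA k n) where
  app : ∀ v, M.V v →ₗ[k] N.V v
  naturality : ∀ a : Fin n, app a.succ ∘ₗ M.f a = N.f a ∘ₗ app a.castSucc

namespace Hom

theorem app_f {M N : RepA k n} (φ : M.Hom N) (a : Fin n) (x : M.V a.castSucc) :
    φ.app a.succ (M.f a x) = N.f a (φ.app a.castSucc x) :=
  LinearMap.congr_fun (φ.naturality a) x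

/-- Composition of morphisms. -/
def comp {M N P : RepA k n} (ψ : N.Hom P) (φ : M.Hom N) : M.Hom P where
  app v := ψ.app v ∘ₗ φ.app v
  naturality a := by
    rw [LinearMap.comp_assoc, φ.naturality, ← LinearMap.comp_assoc, ψ.naturality,
      LinearMap.comp_assoc]

/-- The inclusion of the first summand of a direct sum. -/
def inl (M N : RepA k n) : M.Hom (M.dsum N) where
  app v := LinearMap.inl k (M.V v) (N.V v)
  naturality a := LinearMap.ext fun _ => Prod.ext rfl (map_zero (N.f a)).symm

/-- The projection of a direct sum onto its first summand. -/
def fst (M N : RepA k n) : (M.dsum N).Hom M where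
  app v := LinearMap.fst k (M.V v) (N.V v)
  naturality _ := rfl

/-- The kernel of a morphism, as a subrepresentation of its source. -/
def ker {M N : RepA k n} (φ : M.Hom N) : RepA k n where
  V v := LinearMap.ker (φ.app v)
  f a := (M.f a).restrict fun x hx => by
    rw [LinearMap.mem_ker] at hx ⊢
    rw [app_f, hx, map_zero]

theorem iso_of_bijective {M N : RepA k n} (φ : M.Hom N)
    (hφ : ∀ v, Function.Bijective (φ.app v)) : M.Iso N :=
  ⟨fun v => LinearEquiv.ofBijective (φ.app v) (hφ v), φ.app_f⟩

theorem iso_dsum_ker {M N : RepA k n} (ι : N.Hom M) (π : M.Hom N)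
    (h : ∀ v, Function.LeftInverse (π.app v) (ι.app v)) : M.Iso (N.dsum π.ker) := by
  have hker (v) (x : M.V v) : x - ι.app v (π.app v x) ∈ LinearMap.ker (π.app v) := by
    rw [LinearMap.mem_ker, map_sub, h v, sub_self]
  let g (v) : M.V v ≃ₗ[k] N.V v × LinearMap.ker (π.app v) := LinearEquiv.ofLinearMap
    ((π.app v).prod ((LinearMap.id - ι.app v ∘ₗ π.app v).codRestrict _ (hker v)))
    ((ι.app v).coprod (LinearMap.ker (π.app v)).subtype)
    (by ext x <;> simp [h v _])
    (by ext x; simp)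
  refine ⟨g, fun a x => Prod.ext (π.app_f a x) (Subtype.ext ?_)⟩
  change M.f a x - ι.app a.succ (π.app a.succ (M.f a x)) =
    M.f a (x - ι.app a.castSucc (π.app a.castSucc x))
  rw [π.app_f, ι.app_f, map_sub]

end Hom

theorem Indec.iso_of_retract {M N : RepA k n} (hM : M.Indec) (hN : ¬ N.IsZero)
    (ι : N.Hom M) (π : M.Hom N) (h : ∀ v, Function.LeftInverse (π.app v) (ι.app v)) :
    M.Iso N := by
  have hker : π.ker.IsZero := (hM.2 N π.ker (Hom.iso_dsum_ker ι π h)).resolve_left hN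
  refine π.iso_of_bijective fun v => ⟨?_, (h v).surjective⟩
  rw [injective_iff_map_eq_zero]
  exact fun x hx => congrArg Subtype.val (hker v ⟨x, hx⟩)

theorem Iso.exists_hom_leftInverse {M N : RepA k n} :
    M.Iso N → ∃ (φ : M.Hom N) (ψ : N.Hom M), ∀ v, Function.LeftInverse (φ.app v) (ψ.app v) :=
  fun ⟨g, hg⟩ =>
    ⟨⟨fun v => g v, fun a => LinearMap.ext (hg a)⟩,
      ⟨fun v => (g v).symm, fun a => LinearMap.ext (symm_apply_f g hg a)⟩,
      fun v => (g v).apply_symm_apply⟩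

theorem indec_of_end_eq_smul {M : RepA k n} (hM : ¬ M.IsZero)
    (hend : ∀ e : M.Hom M, ∃ c : k, ∀ v x, e.app v x = c • x) : M.Indec := by
  refine ⟨hM, fun N P hiso => ?_⟩
  obtain ⟨φ, ψ, hφψ⟩ := hiso.exists_hom_leftInverse
  obtain ⟨c, hc⟩ := hend (ψ.comp ((Hom.inl N P).comp ((Hom.fst N P).comp φ)))
  have hproj (v) (p : (N.dsum P).V v) : (Hom.inl N P).app v ((Hom.fst N P).app v p) = c • p := by
    have hp := congrArg (φ.app v) (hc v (ψ.app v p))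
    simp only [Hom.comp, LinearMap.comp_apply, map_smul, hφψ v _] at hp
    exact hp
  by_cases hc₀ : c = 0
  · left
    intro v y
    have hy : y = c • y := congrArg Prod.fst (hproj v (y, 0))
    rw [hy, hc₀, zero_smul]
  · right
    intro v z
    have hz : 0 = c • z := congrArg Prod.snd (hproj v (0, z))
    exact (smul_eq_zero_iff_right hc₀).1 hz.symm

/-- The composite `V_v → V_w` of the structure maps, extended by zero to `w < v`. -/
def path (M : RepA k n) (v : Fin (n + 1)) : ∀ w, M.V v →ₗ[k] M.V w :=
  let δ : ∀ w, M.V v →ₗ[k] M.V w := Pi.single v LinearMap.id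
  Fin.induction (δ 0) fun a p => δ a.succ + M.f a ∘ₗ p

section path

variable (M : RepA k n)

theorem path_zero (v : Fin (n + 1)) :
    M.path v 0 = (Pi.single v LinearMap.id : ∀ w, M.V v →ₗ[k] M.V w) 0 := rfl

theorem path_succ (v : Fin (n + 1)) (a : Fin n) :
    M.path v a.succ = (Pi.single v LinearMap.id : ∀ w, M.V v →ₗ[k] M.V w) a.succ +
      M.f a ∘ₗ M.path v a.castSucc := rfl

theorem path_of_lt {v w : Fin (n + 1)} (h : w < v) : M.path v w = 0 := by
  induction w using Fin.induction with
  | zero => rw [path_zero, Pi.single_eq_of_ne h.ne]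
  | succ a ih =>
    rw [path_succ, Pi.single_eq_of_ne h.ne, ih (Fin.castSucc_lt_succ.trans h),
      LinearMap.comp_zero, add_zero]

theorem path_self (v : Fin (n + 1)) : M.path v v = LinearMap.id := by
  cases v using Fin.cases with
  | zero => rw [path_zero, Pi.single_eq_same]
  | succ a =>
    rw [path_succ, Pi.single_eq_same, path_of_lt M Fin.castSucc_lt_succ, LinearMap.comp_zero,
      add_zero]

theorem path_succ_of_le {v : Fin (n + 1)} {a : Fin n} (h : v ≤ a.castSucc) :
    M.path v a.succ = M.f a ∘ₗ M.path v a.castSucc := by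
  rw [path_succ, Pi.single_eq_of_ne (h.trans_lt Fin.castSucc_lt_succ).ne', zero_add]

theorem path_comp_path {u v w : Fin (n + 1)} (huv : u ≤ v) (hvw : v ≤ w) :
    M.path v w ∘ₗ M.path u v = M.path u w := by
  induction hvw using fin_le_induction with
  | self => rw [path_self, LinearMap.id_comp]
  | succ a ha ih =>
    rw [path_succ_of_le M ha, path_succ_of_le M (huv.trans ha), LinearMap.comp_assoc, ih]

theorem path_comp_f {a : Fin n} {w : Fin (n + 1)} (h : a.succ ≤ w) :
    M.path a.succ w ∘ₗ M.f a = M.path a.castSucc w := by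
  have hf : M.path a.castSucc a.succ = M.f a := by
    rw [path_succ_of_le M le_rfl, path_self, LinearMap.comp_id]
  rw [← hf, path_comp_path M Fin.castSucc_lt_succ.le h]

end path

theorem Hom.app_path {M N : RepA k n} (φ : M.Hom N) (v w : Fin (n + 1)) (x : M.V v) :
    φ.app w (M.path v w x) = N.path v w (φ.app v x) := by
  rcases lt_or_ge w v with hwv | hvw
  · simp only [path_of_lt _ hwv, LinearMap.zero_apply, map_zero]
  · induction hvw using fin_le_induction with
    | self => simp only [path_self, LinearMap.id_apply]
    | succ a ha ih => simp only [path_succ_of_le _ ha, LinearMap.comp_apply, app_f, ih]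

theorem exists_path_ne_zero {M : RepA k n} (hM : ¬ M.IsZero) :
    ∃ i j, M.path i j ≠ 0 ∧ (∀ w, j < w → M.path i w = 0) ∧ ∀ u, u < i → M.path u j = 0 := by
  have hne : {v | ∃ x : M.V v, x ≠ 0}.Nonempty := by
    simpa only [IsZero, not_forall, Set.Nonempty, Set.mem_ofPred_eq] using hM
  obtain ⟨i, hi⟩ := (Set.toFinite _).exists_minimal hne
  have hii : M.path i i ≠ 0 := by
    obtain ⟨x, hx⟩ := hi.prop
    rw [path_self]
    exact fun h => hx (LinearMap.congr_fun h x)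
  obtain ⟨j, hj⟩ := (Set.toFinite {w | M.path i w ≠ 0}).exists_maximal ⟨i, hii⟩
  refine ⟨i, j, hj.prop, fun w hw => not_not.1 (hj.not_prop_of_gt hw), fun u hu => ?_⟩
  ext x
  have hx : x = 0 := by
    by_contra hx
    exact hi.not_prop_of_lt hu ⟨x, hx⟩
  rw [hx, map_zero, map_zero]

/-- The coordinate of a vector of `M_{ij}` at the vertex `v`. That space is encoded as the
functions to `k` on the proofs of `i ≤ v ≤ j`, so it is a copy of `k` for `v` in `[i, j]` and zero
otherwise. -/
def intervalCoord (k : Type) [Field k] {n : ℕ} (i j v : Fin (n + 1)) :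
    (PLift (v ∈ Set.Icc i j) → k) →ₗ[k] k :=
  if hv : v ∈ Set.Icc i j then LinearMap.proj ⟨hv⟩ else 0

/-- The representation `M_{ij}`: one-dimensional at the vertices of `[i, j]`, with structure maps
preserving the coordinate. -/
def interval (k : Type) [Field k] {n : ℕ} (i j : Fin (n + 1)) : RepA k n where
  V v := PLift (v ∈ Set.Icc i j) → k
  f a := LinearMap.pi fun _ => intervalCoord k i j a.castSucc

/-- The vector of `M_{ij}` at the vertex `v` with coordinate `1`; it is zero off the interval. -/
def intervalGen (k : Type) [Field k] {n : ℕ} (i j v : Fin (n + 1)) : (interval k i j).V v :=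
  fun _ => (1 : k)

section interval

variable {i j : Fin (n + 1)}

theorem intervalCoord_of_mem {v : Fin (n + 1)} (hv : v ∈ Set.Icc i j)
    (y : PLift (v ∈ Set.Icc i j) → k) : intervalCoord k i j v y = y ⟨hv⟩ := by
  rw [intervalCoord, dif_pos hv, LinearMap.proj_apply]

theorem intervalGen_of_notMem {v : Fin (n + 1)} (hv : v ∉ Set.Icc i j) :
    intervalGen k i j v = 0 :=
  funext fun hv' => (hv hv'.down).elim

theorem intervalCoord_smul_intervalGen {v : Fin (n + 1)} (y : (interval k i j).V v) :
    intervalCoord k i j v y • intervalGen k i j v = y :=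
  funext fun hv => (mul_one _).trans (intervalCoord_of_mem hv.down y)

theorem linearMap_interval_ext {v : Fin (n + 1)} {W : Type*} [AddCommMonoid W] [Module k W]
    {φ ψ : (interval k i j).V v →ₗ[k] W}
    (h : φ (intervalGen k i j v) = ψ (intervalGen k i j v)) : φ = ψ := by
  ext y
  rw [← intervalCoord_smul_intervalGen y, map_smul, map_smul, h]

theorem f_intervalGen {a : Fin n} (h : i ≤ a.castSucc) :
    (interval k i j).f a (intervalGen k i j a.castSucc) = intervalGen k i j a.succ :=
  funext fun ha => intervalCoord_of_mem ⟨h, Fin.castSucc_lt_succ.le.trans ha.down.2⟩ _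

theorem path_intervalGen (v : Fin (n + 1)) :
    (interval k i j).path i v (intervalGen k i j i) = intervalGen k i j v := by
  rcases lt_or_ge v i with hvi | hiv
  · rw [path_of_lt _ hvi, intervalGen_of_notMem fun hv => hv.1.not_gt hvi, LinearMap.zero_apply]
  · induction hiv using fin_le_induction with
    | self => rw [path_self, LinearMap.id_apply]
    | succ a ha ih => rw [path_succ_of_le _ ha, LinearMap.comp_apply, ih, f_intervalGen ha]

theorem dimVec_interval (i j : Fin (n + 1)) :
    (interval k i j).dimVec = fun v => if i ≤ v ∧ v ≤ j then 1 else 0 := by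
  funext v
  change finrank k (PLift (v ∈ Set.Icc i j) → k) = _
  rw [finrank_fintype_fun_eq_card]
  split_ifs with h
  · exact Fintype.card_eq_one_iff.2 ⟨⟨h⟩, fun _ => rfl⟩
  · exact Fintype.card_eq_zero_iff.2 ⟨fun hv => h hv.down⟩

theorem not_isZero_interval (hij : i ≤ j) : ¬ (interval k i j).IsZero := fun h =>
  one_ne_zero (α := k) (congrFun (h i (intervalGen k i j i)) ⟨le_rfl, hij⟩)

theorem end_interval_eq_smul (e : (interval k i j).Hom (interval k i j)) :
    ∃ c : k, ∀ v y, e.app v y = c • y := by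
  let c := intervalCoord k i j i (e.app i (intervalGen k i j i))
  have happ (v) : e.app v = c • LinearMap.id := linearMap_interval_ext <| by
    rw [← path_intervalGen, e.app_path, ← intervalCoord_smul_intervalGen (e.app i _),
      map_smul, LinearMap.smul_apply, LinearMap.id_apply]
  exact ⟨c, fun v => LinearMap.congr_fun (happ v)⟩

theorem indec_interval (hij : i ≤ j) : (interval k i j).Indec :=
  indec_of_end_eq_smul (not_isZero_interval hij) end_interval_eq_smul

theorem dimVec_interval_inj {i' j' : Fin (n + 1)} (hij : i ≤ j)
    (h : (interval k i j).dimVec = (interval k i' j').dimVec) : i = i' ∧ j = j' := by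
  rw [← Set.Icc_eq_Icc_iff hij]
  ext v
  have hv := congrFun h v
  simp only [dimVec_interval] at hv
  rw [Set.mem_Icc, Set.mem_Icc]
  split_ifs at hv <;> tauto

theorem intervalCoord_intervalGen_smul_path {M : RepA k n} {x : M.V i}
    (hx : ∀ w, j < w → M.path i w x = 0) (v : Fin (n + 1)) :
    intervalCoord k i j v (intervalGen k i j v) • M.path i v x = M.path i v x := by
  by_cases hv : v ∈ Set.Icc i j
  · have hcoord : intervalCoord k i j v (intervalGen k i j v) = 1 := intervalCoord_of_mem hv _
    rw [hcoord, one_smul]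
  · have hpath : M.path i v x = 0 := by
      rcases lt_or_ge v i with hvi | hiv
      · rw [path_of_lt M hvi, LinearMap.zero_apply]
      · exact hx v (not_le.1 fun hvj => hv ⟨hiv, hvj⟩)
    rw [hpath, smul_zero]

/-- The morphism `M_{ij} → M` determined by a vector `x` at `i` that dies beyond `j`. -/
def ofInterval {M : RepA k n} (x : M.V i) (hx : ∀ w, j < w → M.path i w x = 0) :
    (interval k i j).Hom M where
  app v := (intervalCoord k i j v).smulRight (M.path i v x)
  naturality a := linearMap_interval_ext <| by
    rcases lt_or_ge a.castSucc i with hai | hia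
    · rw [intervalGen_of_notMem fun ha => ha.1.not_gt hai, map_zero, map_zero]
    · change intervalCoord k i j a.succ ((interval k i j).f a (intervalGen k i j a.castSucc)) •
          M.path i a.succ x =
        M.f a (intervalCoord k i j a.castSucc (intervalGen k i j a.castSucc) •
          M.path i a.castSucc x)
      rw [f_intervalGen hia, intervalCoord_intervalGen_smul_path hx,
        intervalCoord_intervalGen_smul_path hx, path_succ_of_le M hia, LinearMap.comp_apply]

theorem ofInterval_app_intervalGen {M : RepA k n} (x : M.V i)
    (hx : ∀ w, j < w → M.path i w x = 0) (v : Fin (n + 1)) :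
    (ofInterval x hx).app v (intervalGen k i j v) = M.path i v x :=
  intervalCoord_intervalGen_smul_path hx v

/-- The morphism `M → M_{ij}` determined by a functional `ψ` at `j` that vanishes on everything
coming from before `i`. -/
def toInterval {M : RepA k n} (ψ : Dual k (M.V j)) (hψ : ∀ u, u < i → ψ ∘ₗ M.path u j = 0) :
    M.Hom (interval k i j) where
  app v := LinearMap.pi fun _ => ψ ∘ₗ M.path v j
  naturality a := by
    refine LinearMap.ext fun y => funext fun ha => ?_
    change ψ ((M.path a.succ j ∘ₗ M.f a) y) =
      intervalCoord k i j a.castSucc fun _ => ψ (M.path a.castSucc j y)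
    rw [path_comp_f M ha.down.2]
    rcases lt_or_ge a.castSucc i with hai | hia
    · have hzero : ψ (M.path a.castSucc j y) = 0 := LinearMap.congr_fun (hψ _ hai) y
      rw [hzero]
      exact (map_zero (intervalCoord k i j a.castSucc)).symm
    · rw [intervalCoord_of_mem ⟨hia, Fin.castSucc_lt_succ.le.trans ha.down.2⟩]

theorem leftInverse_toInterval_ofInterval {M : RepA k n} {x : M.V i} {ψ : Dual k (M.V j)}
    (hx : ∀ w, j < w → M.path i w x = 0) (hψ : ∀ u, u < i → ψ ∘ₗ M.path u j = 0)
    (h : ψ (M.path i j x) = 1) (v : Fin (n + 1)) :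
    Function.LeftInverse ((toInterval ψ hψ).app v) ((ofInterval x hx).app v) := by
  refine LinearMap.congr_fun (f := (toInterval ψ hψ).app v ∘ₗ (ofInterval x hx).app v)
    (g := LinearMap.id) (linearMap_interval_ext ?_)
  rw [LinearMap.comp_apply, ofInterval_app_intervalGen]
  funext hv
  change ψ ((M.path v j ∘ₗ M.path i v) x) = 1
  rw [path_comp_path M hv.down.1 hv.down.2, h]

end interval

theorem Indec.exists_iso_interval {M : RepA k n} (hM : M.Indec) :
    ∃ i j, i ≤ j ∧ M.Iso (interval k i j) := by
  obtain ⟨i, j, hne, hout, hin⟩ := exists_path_ne_zero hM.1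
  have hij : i ≤ j := not_lt.1 fun hji => hne (M.path_of_lt hji)
  obtain ⟨x, hx⟩ : ∃ x, M.path i j x ≠ 0 := by
    by_contra! h
    exact hne (LinearMap.ext h)
  obtain ⟨ψ, hψ⟩ := Module.Projective.exists_dual_eq_one k hx
  refine ⟨i, j, hij, hM.iso_of_retract (not_isZero_interval hij) (ofInterval x ?_)
    (toInterval ψ ?_) (leftInverse_toInterval_ofInterval _ _ hψ)⟩
  · exact fun w hw => by rw [hout w hw, LinearMap.zero_apply]
  · exact fun u hu => by rw [hin u hu, LinearMap.comp_zero]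

end RepA

/-- Gabriel's theorem in type `A`: for each interval `[i,j]` there is an
indecomposable representation `M_{ij}` with dimension vector the indicator
function of `[i,j]`; every indecomposable has such a dimension vector; and two
indecomposables with the same dimension vector are isomorphic.  In particular
the indecomposables are, up to isomorphism, exactly the `M_{ij}`, and their
number is the number of positive roots of type `A`. -/
theorem gabriel_theorem_typeA (k : Type) [Field k] (n : ℕ) :
    (∀ i j : Fin (n + 1), i ≤ j → ∃ M : RepA k n, M.Indec ∧
        M.dimVec = fun v => if i ≤ v ∧ v ≤ j then 1 else 0)
    ∧ (∀ M : RepA k n, M.Indec → ∃ i j : Fin (n + 1), i ≤ j ∧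
        M.dimVec = fun v => if i ≤ v ∧ v ≤ j then 1 else 0)
    ∧ (∀ M N : RepA k n, M.Indec → N.Indec → M.dimVec = N.dimVec → M.Iso N) := by
  refine ⟨fun i j hij => ⟨RepA.interval k i j, RepA.indec_interval hij,
    RepA.dimVec_interval i j⟩, fun M hM => ?_, fun M N hM hN hdim => ?_⟩
  · obtain ⟨i, j, hij, hMij⟩ := hM.exists_iso_interval
    exact ⟨i, j, hij, hMij.dimVec_eq.trans (RepA.dimVec_interval i j)⟩
  · obtain ⟨i, j, hij, hMij⟩ := hM.exists_iso_interval
    obtain ⟨i', j', -, hNij⟩ := hN.exists_iso_interval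
    obtain ⟨rfl, rfl⟩ := RepA.dimVec_interval_inj hij
      (hMij.dimVec_eq.symm.trans (hdim.trans hNij.dimVec_eq))
    exact hMij.trans hNij.symm
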